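/- arXiv:2506.08259 — 3 statements merged into one kernel-verified Lean document; each statement's English description precedes it below -/
import Mathlib

section
/- Let P0 ⊆ Δ_{k-1} be closed with ∅ ≠ P0 ≠ Δ_{k-1} and PA = Δ_{k-1} \ P0. There exists an NTUB test of P0 against PA of sample size n if and only if there exists a real polynomial β̃ in k variables of total degree at most n such that β̃ is not constant on Δ_{k-1}, β̃(π) ≤ 0 for all π ∈ P0, and β̃(π) ≥ 0 for all π ∈ PA. -/
open Finset

/-- The probability simplex on a finite index set `ι`. -/
def probSimplex (ι : Type) [Fintype ι] : Set (ι → ℝ) :=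
  {π | (∀ i, 0 ≤ π i) ∧ ∑ i, π i = 1}

/-- Count vectors of sample size `n`: functions `x : ι → ℕ` with `∑ i, x i = n`. -/
def countVecs (ι : Type) [Fintype ι] [DecidableEq ι] (n : ℕ) : Finset (ι → ℕ) :=
  (Fintype.piFinset fun _ : ι => Finset.range (n + 1)).filter fun x => ∑ i, x i = n

/-- A (randomized) test of sample size `n`: values in `[0,1]` on all count vectors. -/
def IsTest (ι : Type) [Fintype ι] [DecidableEq ι] (n : ℕ) (φ : (ι → ℕ) → ℝ) : Prop :=
  ∀ x ∈ countVecs ι n, 0 ≤ φ x ∧ φ x ≤ 1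

/-- The power function of a test. -/
noncomputable def powerFn (ι : Type) [Fintype ι] [DecidableEq ι] (n : ℕ)
    (φ : (ι → ℕ) → ℝ) (π : ι → ℝ) : ℝ :=
  ∑ x ∈ countVecs ι n, φ x * (Nat.multinomial Finset.univ x : ℝ) * ∏ i, π i ^ x i

/-- Unbiasedness relative to the null hypothesis `P0`. -/
def Unbiased (ι : Type) [Fintype ι] [DecidableEq ι] (n : ℕ) (P0 : Set (ι → ℝ))
    (φ : (ι → ℕ) → ℝ) : Prop :=
  ∀ π0 ∈ P0, ∀ πA ∈ probSimplex ι \ P0, powerFn ι n φ π0 ≤ powerFn ι n φ πA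

/-- Non-trivial unbiased test: unbiased with non-constant power on the simplex. -/
def IsNTUB (ι : Type) [Fintype ι] [DecidableEq ι] (n : ℕ) (P0 : Set (ι → ℝ))
    (φ : (ι → ℕ) → ℝ) : Prop :=
  Unbiased ι n P0 φ ∧
    ∃ π ∈ probSimplex ι, ∃ π' ∈ probSimplex ι, powerFn ι n φ π ≠ powerFn ι n φ π'

/-- Strictly unbiased test. -/
def IsSUB (ι : Type) [Fintype ι] [DecidableEq ι] (n : ℕ) (P0 : Set (ι → ℝ))
    (φ : (ι → ℕ) → ℝ) : Prop :=
  ∀ π0 ∈ P0, ∀ πA ∈ probSimplex ι \ P0, powerFn ι n φ π0 < powerFn ι n φ πA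

/-- Level-`α` test. -/
def IsLevel (ι : Type) [Fintype ι] [DecidableEq ι] (n : ℕ) (P0 : Set (ι → ℝ)) (α : ℝ)
    (φ : (ι → ℕ) → ℝ) : Prop :=
  ∀ π ∈ P0, powerFn ι n φ π ≤ α

/-- A test has size `α` if the supremum of its power over `P0` is `α`. -/
def HasSize (ι : Type) [Fintype ι] [DecidableEq ι] (n : ℕ) (P0 : Set (ι → ℝ)) (α : ℝ)
    (φ : (ι → ℕ) → ℝ) : Prop :=
  IsLUB (powerFn ι n φ '' P0) α

/-- Uniformly most powerful unbiased level-`α` test. -/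
def IsUMPU (ι : Type) [Fintype ι] [DecidableEq ι] (n : ℕ) (P0 : Set (ι → ℝ)) (α : ℝ)
    (φ : (ι → ℕ) → ℝ) : Prop :=
  IsLevel ι n P0 α φ ∧ Unbiased ι n P0 φ ∧
    ∀ ψ, IsTest ι n ψ → IsLevel ι n P0 α ψ → Unbiased ι n P0 ψ →
      ∀ πA ∈ probSimplex ι \ P0, powerFn ι n ψ πA ≤ powerFn ι n φ πA

/-!
Power functions of tests are exactly the forms of degree `n` whose coefficients, divided by the
corresponding multinomial coefficients, lie in `[0, 1]`. On the simplex `∑ i, π i = 1`, so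
multiplying each homogeneous component by a power of `∑ i, X i` turns any polynomial of degree at
most `n` into a form of degree `n` with the same values, and an increasing affine map
`t ↦ a * t + b` brings its normalized coefficients into `[0, 1]`. Conversely, an unbiased power
function is turned into a separating polynomial by subtracting a threshold lying between its values
on the null hypothesis and those on the alternative.
-/

section Homogenization

open MvPolynomial

variable {σ R : Type*} [Fintype σ] [CommSemiring R]

/-- Homogenization of `p` in degree `n` by the linear form `∑ j, X j`, which equals `1` on the
simplex, instead of by an extra variable. It is only meaningful for `p.totalDegree ≤ n`, as the
exponent `n - i` is truncated. -/
noncomputable def sumHomogenize (n : ℕ) (p : MvPolynomial σ R) : MvPolynomial σ R :=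
  ∑ i ∈ range (p.totalDegree + 1), homogeneousComponent i p * (∑ j, X j) ^ (n - i)

theorem isHomogeneous_sumHomogenize {n : ℕ} {p : MvPolynomial σ R} (hp : p.totalDegree ≤ n) :
    (sumHomogenize n p).IsHomogeneous n := by
  refine IsHomogeneous.sum _ _ _ fun i hi => ?_
  have sum_X_homogeneous : (∑ j : σ, (X j : MvPolynomial σ R)).IsHomogeneous 1 :=
    IsHomogeneous.sum _ _ _ fun j _ => isHomogeneous_X R j
  have degree_eq : i + 1 * (n - i) = n := by
    have := mem_range.1 hi
    lia
  simpa only [degree_eq] using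
    (homogeneousComponent_isHomogeneous i p).mul (sum_X_homogeneous.pow (n - i))

theorem eval_sumHomogenize (n : ℕ) (p : MvPolynomial σ R) {π : σ → R} (hπ : ∑ j, π j = 1) :
    eval π (sumHomogenize n p) = eval π p := by
  conv_rhs => rw [← sum_homogeneousComponent p]
  simp only [sumHomogenize, map_sum, map_mul, map_pow, eval_X, hπ, one_pow, mul_one]

end Homogenization

section PowerFunction

variable {ι : Type} [Fintype ι] [DecidableEq ι] {n : ℕ} {φ ψ : (ι → ℕ) → ℝ} {π : ι → ℝ}

theorem mem_countVecs {x : ι → ℕ} : x ∈ countVecs ι n ↔ ∑ i, x i = n := by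
  simp only [countVecs, mem_filter, Fintype.mem_piFinset, mem_range, and_iff_right_iff_imp]
  rintro rfl i
  exact Nat.lt_succ_of_le (single_le_sum_of_canonicallyOrdered (mem_univ i))

theorem countVecs_eq_piAntidiag : countVecs ι n = piAntidiag univ n := by
  ext x
  simp [mem_countVecs]

theorem powerFn_const (c : ℝ) (hπ : ∑ i, π i = 1) : powerFn ι n (fun _ => c) π = c := by
  have multinomial_theorem := sum_pow_eq_sum_piAntidiag univ π n
  rw [hπ, one_pow, ← countVecs_eq_piAntidiag] at multinomial_theorem
  simp_rw [powerFn, mul_assoc, ← mul_sum, ← multinomial_theorem, mul_one]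

theorem powerFn_const_mul_add (a b : ℝ) (hπ : ∑ i, π i = 1) :
    powerFn ι n (fun x => a * φ x + b) π = a * powerFn ι n φ π + b := by
  conv_rhs => rw [← powerFn_const (n := n) b hπ]
  simp only [powerFn, mul_sum, ← sum_add_distrib]
  exact sum_congr rfl fun x _ => by ring

theorem powerFn_le_powerFn (hφψ : ∀ x ∈ countVecs ι n, φ x ≤ ψ x) (hπ : ∀ i, 0 ≤ π i) :
    powerFn ι n φ π ≤ powerFn ι n ψ π := by
  refine sum_le_sum fun x hx => ?_
  have monomial_nonneg : 0 ≤ ∏ i, π i ^ x i := prod_nonneg fun i _ => pow_nonneg (hπ i) _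
  gcongr
  exact hφψ x hx

theorem IsTest.powerFn_mem_Icc (hφ : IsTest ι n φ) (hπ : π ∈ probSimplex ι) :
    powerFn ι n φ π ∈ Set.Icc 0 1 := by
  constructor
  · simpa only [powerFn_const 0 hπ.2] using
      powerFn_le_powerFn (φ := fun _ => 0) (fun x hx => (hφ x hx).1) hπ.1
  · simpa only [powerFn_const 1 hπ.2] using
      powerFn_le_powerFn (ψ := fun _ => 1) (fun x hx => (hφ x hx).2) hπ.1

theorem exists_isTest_const_mul_add (n : ℕ) (φ : (ι → ℕ) → ℝ) :
    ∃ a > 0, ∃ b, IsTest ι n fun x => a * φ x + b := by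
  obtain ⟨M, hM⟩ := ((countVecs ι n).image fun x => |φ x|).exists_le
  have bound_pos : 0 < 2 * (|M| + 1) := by positivity
  refine ⟨(2 * (|M| + 1))⁻¹, inv_pos.2 bound_pos, 1 / 2, fun x hx => ?_⟩
  have abs_le_bound : |φ x| ≤ |M| + 1 := by
    linarith [hM _ (mem_image_of_mem _ hx), le_abs_self M]
  have abs_scaled_le : |(2 * (|M| + 1))⁻¹ * φ x| ≤ 1 / 2 := by
    rw [abs_mul, abs_of_pos (inv_pos.2 bound_pos), inv_mul_le_iff₀ bound_pos]
    linarith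
  constructor <;> linarith [abs_le.1 abs_scaled_le]

theorem IsTest.unbiased_iff_exists_threshold {P0 : Set (ι → ℝ)} (hP0 : P0 ⊆ probSimplex ι)
    (hφ : IsTest ι n φ) :
    Unbiased ι n P0 φ ↔ ∃ c, (∀ π ∈ P0, powerFn ι n φ π ≤ c) ∧
      ∀ π ∈ probSimplex ι \ P0, c ≤ powerFn ι n φ π := by
  refine ⟨fun unbiased => ?_, fun ⟨c, hle, hge⟩ π₀ h₀ πA hA => (hle π₀ h₀).trans (hge πA hA)⟩
  -- Adjoining `0` and `1` covers the case where `P0` or the alternative is empty.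
  obtain ⟨c, hle, hge⟩ := exists_between_of_forall_le
    (s := insert 0 (powerFn ι n φ '' P0)) (t := insert 1 (powerFn ι n φ '' (probSimplex ι \ P0)))
    (Set.insert_nonempty _ _) (Set.insert_nonempty _ _) (by
      rintro _ (rfl | ⟨π₀, h₀, rfl⟩) _ (rfl | ⟨πA, hA, rfl⟩)
      · exact zero_le_one
      · exact (hφ.powerFn_mem_Icc hA.1).1
      · exact (hφ.powerFn_mem_Icc (hP0 h₀)).2
      · exact unbiased π₀ h₀ πA hA)
  exact ⟨c, fun π hπ => hle (.inr ⟨π, hπ, rfl⟩), fun π hπ => hge (.inr ⟨π, hπ, rfl⟩)⟩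

end PowerFunction

section PowerPolynomial

open MvPolynomial

variable {ι : Type} [Fintype ι] [DecidableEq ι] {n : ℕ}

/-- The power function of `φ` as a formal polynomial; see `eval_powerPoly`. -/
noncomputable def powerPoly (n : ℕ) (φ : (ι → ℕ) → ℝ) : MvPolynomial ι ℝ :=
  ∑ x ∈ countVecs ι n, monomial (Finsupp.equivFunOnFinite.symm x) (φ x * Nat.multinomial univ x)

theorem eval_powerPoly (φ : (ι → ℕ) → ℝ) (π : ι → ℝ) :
    eval π (powerPoly n φ) = powerFn ι n φ π := by
  simp [powerPoly, powerFn, eval_monomial, Finsupp.prod_fintype]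

theorem coeff_powerPoly (φ : (ι → ℕ) → ℝ) (d : ι →₀ ℕ) :
    coeff d (powerPoly n φ) = if d.degree = n then φ d * Nat.multinomial univ d else 0 := by
  have exponent_eq_iff (x : ι → ℕ) : Finsupp.equivFunOnFinite.symm x = d ↔ x = d :=
    Finsupp.equivFunOnFinite.symm_apply_eq
  simp [powerPoly, coeff_sum, coeff_monomial, exponent_eq_iff, mem_countVecs, Finsupp.degree_eq_sum]

theorem totalDegree_powerPoly_le (φ : (ι → ℕ) → ℝ) : (powerPoly n φ).totalDegree ≤ n := by
  refine (IsHomogeneous.sum _ _ _ fun x hx => isHomogeneous_monomial _ ?_).totalDegree_le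
  simpa [Finsupp.degree_eq_sum] using mem_countVecs.1 hx

theorem exists_powerPoly_eq {p : MvPolynomial ι ℝ} (hp : p.IsHomogeneous n) :
    ∃ φ, powerPoly n φ = p := by
  refine ⟨fun x => coeff (Finsupp.equivFunOnFinite.symm x) p / Nat.multinomial univ x, ?_⟩
  ext d
  have multinomial_ne_zero : (Nat.multinomial univ d : ℝ) ≠ 0 :=
    Nat.cast_ne_zero.2 (Nat.multinomial_pos _ _).ne'
  rw [coeff_powerPoly]
  split_ifs with hd
  · simp [div_mul_cancel₀ _ multinomial_ne_zero]
  · exact (hp.coeff_eq_zero hd).symm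

theorem exists_powerFn_eqOn_eval {β : MvPolynomial ι ℝ} (hβ : β.totalDegree ≤ n) :
    ∃ φ, Set.EqOn (powerFn ι n φ) (fun π => eval π β) (probSimplex ι) := by
  obtain ⟨φ, hφ⟩ := exists_powerPoly_eq (isHomogeneous_sumHomogenize hβ)
  exact ⟨φ, fun π hπ => by rw [← eval_powerPoly, hφ, eval_sumHomogenize n β hπ.2]⟩

/-- `β` separates the null hypothesis `P0` from its complement in the simplex: it is non-constant on
the simplex, nonpositive on `P0` and nonnegative on the alternative. -/
def IsSeparating (P0 : Set (ι → ℝ)) (β : MvPolynomial ι ℝ) : Prop :=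
  (∃ π ∈ probSimplex ι, ∃ π' ∈ probSimplex ι, eval π β ≠ eval π' β) ∧
    (∀ π ∈ P0, eval π β ≤ 0) ∧ ∀ π ∈ probSimplex ι \ P0, 0 ≤ eval π β

theorem IsNTUB.exists_isSeparating {P0 : Set (ι → ℝ)} (hP0 : P0 ⊆ probSimplex ι)
    {φ : (ι → ℕ) → ℝ} (hφ : IsTest ι n φ) (hntub : IsNTUB ι n P0 φ) :
    ∃ β : MvPolynomial ι ℝ, β.totalDegree ≤ n ∧ IsSeparating P0 β := by
  obtain ⟨unbiased, π, hπ, π', hπ', power_ne⟩ := hntub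
  obtain ⟨c, hle, hge⟩ := (hφ.unbiased_iff_exists_threshold hP0).1 unbiased
  have eval_eq (π : ι → ℝ) : eval π (powerPoly n φ - C c) = powerFn ι n φ π - c := by
    rw [map_sub, eval_powerPoly, eval_C]
  refine ⟨powerPoly n φ - C c, (totalDegree_sub_C_le _ _).trans (totalDegree_powerPoly_le φ),
    ⟨π, hπ, π', hπ', ?_⟩, fun π hπ => ?_, fun π hπ => ?_⟩
  · simpa only [eval_eq, ne_eq, sub_left_inj] using power_ne
  · rw [eval_eq]
    exact sub_nonpos.2 (hle π hπ)
  · rw [eval_eq]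
    exact sub_nonneg.2 (hge π hπ)

theorem IsSeparating.exists_isNTUB {P0 : Set (ι → ℝ)} (hP0 : P0 ⊆ probSimplex ι)
    {β : MvPolynomial ι ℝ} (hdeg : β.totalDegree ≤ n) (hβ : IsSeparating P0 β) :
    ∃ φ, IsTest ι n φ ∧ IsNTUB ι n P0 φ := by
  obtain ⟨⟨π, hπ, π', hπ', eval_ne⟩, hle, hge⟩ := hβ
  obtain ⟨ψ, hψ⟩ := exists_powerFn_eqOn_eval hdeg
  obtain ⟨a, ha, b, htest⟩ := exists_isTest_const_mul_add n ψ
  have power_eq {π : ι → ℝ} (hπ : π ∈ probSimplex ι) :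
      powerFn ι n (fun x => a * ψ x + b) π = a * eval π β + b := by
    rw [powerFn_const_mul_add a b hπ.2, hψ hπ]
  refine ⟨_, htest, (htest.unbiased_iff_exists_threshold hP0).2 ⟨b, fun π hπ => ?_, fun π hπ => ?_⟩,
    π, hπ, π', hπ', ?_⟩
  · rw [power_eq (hP0 hπ)]
    exact add_le_of_nonpos_left (mul_nonpos_of_nonneg_of_nonpos ha.le (hle π hπ))
  · rw [power_eq hπ.1]
    exact le_add_of_nonneg_left (mul_nonneg ha.le (hge π hπ))
  · simpa only [power_eq hπ, power_eq hπ', ne_eq, add_left_inj, mul_right_inj' ha.ne'] using eval_ne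

theorem stmt_3_general {P0 : Set (ι → ℝ)} (hP0 : P0 ⊆ probSimplex ι) :
    (∃ φ, IsTest ι n φ ∧ IsNTUB ι n P0 φ) ↔
      ∃ β : MvPolynomial ι ℝ, β.totalDegree ≤ n ∧ IsSeparating P0 β :=
  ⟨fun ⟨_, htest, hntub⟩ => hntub.exists_isSeparating hP0 htest,
    fun ⟨_, hdeg, hβ⟩ => hβ.exists_isNTUB hP0 hdeg⟩

end PowerPolynomial

/-- an NTUB test of sample size `n` exists iff there is a separating polynomial
of degree at most `n`, non-constant on the simplex, nonpositive on `P0` and nonnegative on `PA`. -/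
theorem stmt_3 (k n : ℕ) (hk : 2 ≤ k) (hn : 1 ≤ n)
    (P0 : Set (Fin k → ℝ)) (hclosed : IsClosed P0) (hsub : P0 ⊆ probSimplex (Fin k))
    (hne : P0.Nonempty) (hneq : P0 ≠ probSimplex (Fin k)) :
    (∃ φ, IsTest (Fin k) n φ ∧ IsNTUB (Fin k) n P0 φ) ↔
      ∃ β : MvPolynomial (Fin k) ℝ, β.totalDegree ≤ n ∧
        (∃ π ∈ probSimplex (Fin k), ∃ π' ∈ probSimplex (Fin k),
          MvPolynomial.eval π β ≠ MvPolynomial.eval π' β) ∧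
        (∀ π ∈ P0, MvPolynomial.eval π β ≤ 0) ∧
        (∀ π ∈ probSimplex (Fin k) \ P0, 0 ≤ MvPolynomial.eval π β) := by
  exact stmt_3_general hsub
end

section
/- Let P0 be an algebraic null hypothesis (P0 = Δ_{k-1} ∩ {π : g(π)=0 for all g ∈ G} with ∅ ≠ P0 ≠ Δ_{k-1}) with projection P̃0 ⊆ Δ̃_{k-1}, and let I(P̃0) = {f ∈ MvPolynomial (Fin (k−1)) ℝ : f(π') = 0 for all π' ∈ P̃0} be its vanishing ideal. Set d₀ = min{totalDegree f : f ∈ I(P̃0), f ≠ 0} and d = min{i ∈ ℕ : {π' ∈ Δ̃_{k-1} : f(π') = 0 for every f ∈ I(P̃0) with totalDegree f ≤ i} = P̃0}. Then: (a) the minimum total degree of a polynomial of the form ∑_{j=1}^m f_j² with f_1,…,f_m ∈ MvPolynomial (Fin (k−1)) ℝ not all zero that vanishes at every point of P̃0 is exactly 2·d₀; (b) the minimum total degree of such a sum of squares that vanishes at every point of P̃0 and is strictly positive at every point of Δ̃_{k-1} \ P̃0 is exactly 2·d. -/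
open Finset

/-- The projected simplex in `ℝ^(k-1)`. -/
def projSimplex (k : ℕ) : Set (Fin (k - 1) → ℝ) :=
  {π' | (∀ i, 0 ≤ π' i) ∧ ∑ i, π' i ≤ 1}

/-- Identify `π' ∈ Δ̃_{k-1}` with `(π'_1, …, π'_{k-1}, 1 - ∑ i, π' i) ∈ Δ_{k-1}`. -/
def liftProj (k : ℕ) (π' : Fin (k - 1) → ℝ) : Fin k → ℝ :=
  fun i => if h : (i : ℕ) < k - 1 then π' ⟨(i : ℕ), h⟩ else 1 - ∑ j, π' j

/-- Projection of a point of `Δ_{k-1}` onto its first `k-1` coordinates. -/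
def projPoint (k : ℕ) (π : Fin k → ℝ) : Fin (k - 1) → ℝ :=
  fun j => π (Fin.castLE (Nat.sub_le k 1) j)

/-!
Over an ordered field the leading coefficients of squares cannot cancel, so
`deg (∑ f_j²) = 2 max deg f_j`, and `∑ f_j²` vanishes at a point only if every `f_j` does. Hence a
sum of squares vanishes on `V` exactly when all `f_j` lie in the vanishing ideal `I(V)`, which gives
(a). It is in addition positive on `X \ V` exactly when the common zeros of the family
in `X` are the points of `V`; by Hilbert's basis theorem the zero set of all members of `I(V)` of
degree at most `d` is already cut out by finitely many of them, which gives (b). All this works for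
any `V` cut out of a set `X` by polynomial equations; for the projected simplex such equations are
obtained by pulling back along its polynomial bijection with the probability simplex.
-/

open MvPolynomial

section SumSq

variable {σ ι R : Type*}

theorem coeff_add_self_sum_sq_of_degree_le [CommSemiring R] (m : MonomialOrder σ) {s : Finset ι}
    {f : ι → MvPolynomial σ R} {a : σ →₀ ℕ}
    (ha : ∀ i ∈ s, m.toSyn (m.degree (f i)) ≤ m.toSyn a) :
    (∑ i ∈ s, f i ^ 2).coeff (a + a) = ∑ i ∈ s, (f i).coeff a * (f i).coeff a := by
  rw [coeff_sum]
  refine Finset.sum_congr rfl fun i hi => ?_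
  rw [pow_two, m.coeff_mul_of_add_of_degree_le (ha i hi) (ha i hi)]

variable [CommRing R] [LinearOrder R] [IsStrictOrderedRing R]

theorem two_mul_totalDegree_le_totalDegree_sum_sq {s : Finset ι} (f : ι → MvPolynomial σ R)
    {i : ι} (hi : i ∈ s) : 2 * (f i).totalDegree ≤ (∑ j ∈ s, f j ^ 2).totalDegree := by
  obtain ⟨_, _⟩ := exists_wellFoundedGT σ
  let m : MonomialOrder σ := .degLex
  obtain ⟨l, hl, hmax⟩ := s.exists_max_image (fun j => m.toSyn (m.degree (f j))) ⟨i, hi⟩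
  have hil : (f i).totalDegree ≤ (f l).totalDegree := degLex_totalDegree_monotone (hmax i hi)
  rcases eq_or_ne (f l) 0 with hfl | hfl
  · simp_all
  let a := m.degree (f l)
  have hcoeff : (∑ j ∈ s, f j ^ 2).coeff (a + a) ≠ 0 := by
    rw [coeff_add_self_sum_sq_of_degree_le m hmax, Ne, Finset.sum_mul_self_eq_zero_iff]
    exact fun h => m.leadingCoeff_ne_zero_iff.2 hfl (h l hl)
  calc 2 * (f i).totalDegree
      ≤ 2 * (f l).totalDegree := by gcongr
    _ = (a + a).degree := by rw [map_add, two_mul, degree_degLexDegree]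
    _ ≤ (∑ j ∈ s, f j ^ 2).totalDegree := le_totalDegree (mem_support_iff.2 hcoeff)

theorem totalDegree_sum_sq (s : Finset ι) (f : ι → MvPolynomial σ R) :
    (∑ i ∈ s, f i ^ 2).totalDegree = 2 * s.sup fun i => (f i).totalDegree := by
  apply le_antisymm
  · refine totalDegree_finsetSum_le fun i hi => (totalDegree_pow _ _).trans ?_
    gcongr
    exact Finset.le_sup (f := fun i => (f i).totalDegree) hi
  · rcases s.eq_empty_or_nonempty with rfl | hs
    · simp
    · obtain ⟨i, hi, hsup⟩ := s.exists_mem_eq_sup hs fun i => (f i).totalDegree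
      rw [hsup]
      exact two_mul_totalDegree_le_totalDegree_sum_sq f hi

theorem eval_sum_sq_eq_zero_iff {s : Finset ι} {f : ι → MvPolynomial σ R} {x : σ → R} :
    eval x (∑ i ∈ s, f i ^ 2) = 0 ↔ ∀ i ∈ s, eval x (f i) = 0 := by
  simp only [map_sum, pow_two, map_mul, Finset.sum_mul_self_eq_zero_iff]

theorem eval_sum_sq_pos_iff {s : Finset ι} {f : ι → MvPolynomial σ R} {x : σ → R} :
    0 < eval x (∑ i ∈ s, f i ^ 2) ↔ ∃ i ∈ s, eval x (f i) ≠ 0 := by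
  have hnonneg : 0 ≤ eval x (∑ i ∈ s, f i ^ 2) := by
    simp only [map_sum, map_pow]
    exact Finset.sum_nonneg fun i _ => sq_nonneg _
  rw [hnonneg.lt_iff_ne', Ne, eval_sum_sq_eq_zero_iff]
  push Not
  rfl

end SumSq

theorem sum_sq_mem_vanishingIdeal_iff {σ ι K : Type*} [Field K] [LinearOrder K]
    [IsStrictOrderedRing K] {s : Finset ι} {f : ι → MvPolynomial σ K} {V : Set (σ → K)} :
    ∑ i ∈ s, f i ^ 2 ∈ vanishingIdeal K V ↔ ∀ i ∈ s, f i ∈ vanishingIdeal K V := by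
  simp only [mem_vanishingIdeal_iff, aeval_eq_eval, eval_sum_sq_eq_zero_iff]
  grind

section RelativelyAlgebraic

variable {σ τ K : Type*} [Field K] {X V : Set (σ → K)}

/-- `V` is algebraic relative to `X`: it is cut out of `X` by polynomial equations, possibly
infinitely many. -/
def IsRelAlgebraic (X V : Set (σ → K)) : Prop :=
  ∃ G : Set (MvPolynomial σ K), V = X ∩ {x | ∀ g ∈ G, eval x g = 0}

namespace IsRelAlgebraic

theorem subset (hV : IsRelAlgebraic X V) : V ⊆ X := by
  obtain ⟨G, rfl⟩ := hV
  exact Set.inter_subset_left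

theorem inter_zeroLocus_vanishingIdeal (hV : IsRelAlgebraic X V) :
    X ∩ zeroLocus K (vanishingIdeal K V) = V := by
  refine Set.Subset.antisymm ?_ (Set.subset_inter hV.subset (zeroLocus_vanishingIdeal_le V))
  obtain ⟨G, rfl⟩ := hV
  exact fun x hx => ⟨hx.1, fun g hg => hx.2 g fun y hy => hy.2 g hg⟩

theorem vanishingIdeal_ne_bot (hV : IsRelAlgebraic X V) (hVX : V ≠ X) :
    vanishingIdeal K V ≠ ⊥ := by
  intro hbot
  have := hV.inter_zeroLocus_vanishingIdeal
  rw [hbot, zeroLocus_bot, Set.top_eq_univ, Set.inter_univ] at this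
  exact hVX this.symm

theorem inter_preimage_of_eval_eq (hV : IsRelAlgebraic X V) {Y : Set (τ → K)}
    {Φ : (τ → K) → σ → K} {p : σ → MvPolynomial τ K} (hp : ∀ y i, eval y (p i) = Φ y i)
    (hYX : Set.MapsTo Φ Y X) : IsRelAlgebraic Y (Y ∩ Φ ⁻¹' V) := by
  obtain ⟨G, rfl⟩ := hV
  refine ⟨bind₁ p '' G, ?_⟩
  have eval_bind₁ (y : τ → K) (g : MvPolynomial σ K) : eval y (bind₁ p g) = eval (Φ y) g := by
    rw [← funext (hp y)]
    exact eval₂Hom_bind₁ ..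
  ext y
  simp only [Set.mem_inter_iff, Set.mem_preimage, Set.mem_ofPred_eq, Set.forall_mem_image,
    eval_bind₁]
  exact and_congr_right fun hy => and_iff_right (hYX hy)

end IsRelAlgebraic

end RelativelyAlgebraic

section DegreeThresholds

variable {σ K : Type*} [Field K]

/-- The least degree of a nonzero polynomial vanishing on `V`, the paper's `d₀`; it is `0` by
convention if there is no such polynomial. -/
noncomputable def minVanishingDegree (V : Set (σ → K)) : ℕ :=
  sInf (totalDegree '' {f ∈ (vanishingIdeal K V : Set (MvPolynomial σ K)) | f ≠ 0})

/-- The points of `X` that are common zeros of all polynomials of degree at most `i` vanishing on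
`V`: the closest approximation to `V` from outside by equations of degree at most `i`. -/
def degreeHull (X V : Set (σ → K)) (i : ℕ) : Set (σ → K) :=
  {x ∈ X | ∀ f ∈ (vanishingIdeal K V : Set (MvPolynomial σ K)), f.totalDegree ≤ i → eval x f = 0}

/-- The least degree of a system of equations cutting `V` out of `X`, the paper's `d`; it is `0` by
convention if there is no such system. -/
noncomputable def cutOutDegree (X V : Set (σ → K)) : ℕ :=
  sInf {i | degreeHull X V i = V}

variable {X V : Set (σ → K)}

theorem exists_totalDegree_eq_minVanishingDegree (hV : vanishingIdeal K V ≠ ⊥) :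
    ∃ f ∈ vanishingIdeal K V, f ≠ 0 ∧ f.totalDegree = minVanishingDegree V := by
  have hne : {f ∈ (vanishingIdeal K V : Set (MvPolynomial σ K)) | f ≠ 0}.Nonempty :=
    Submodule.exists_mem_ne_zero_of_ne_bot hV
  obtain ⟨f, ⟨hf, hf0⟩, hdeg⟩ := Nat.sInf_mem (hne.image totalDegree)
  exact ⟨f, hf, hf0, hdeg⟩

theorem minVanishingDegree_le {f : MvPolynomial σ K} (hf : f ∈ vanishingIdeal K V) (hf0 : f ≠ 0) :
    minVanishingDegree V ≤ f.totalDegree :=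
  Nat.sInf_le ⟨f, ⟨hf, hf0⟩, rfl⟩

theorem subset_degreeHull (hVX : V ⊆ X) (i : ℕ) : V ⊆ degreeHull X V i :=
  fun x hx => ⟨hVX hx, fun _ hf _ => hf x hx⟩

theorem cutOutDegree_le (hVX : V ⊆ X) {i : ℕ} (hi : degreeHull X V i ⊆ V) :
    cutOutDegree X V ≤ i :=
  Nat.sInf_le (hi.antisymm (subset_degreeHull hVX i))

theorem exists_fin_family_same_zeros [Finite σ] (S : Set (MvPolynomial σ K)) :
    ∃ (m : ℕ) (f : Fin m → MvPolynomial σ K), (∀ j, f j ∈ S) ∧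
      ∀ x : σ → K, (∀ j, eval x (f j) = 0) → ∀ g ∈ S, eval x g = 0 := by
  obtain ⟨s, hsS, hspan⟩ :=
    (Submodule.fg_span_iff_fg_span_finset_subset S).1 (Ideal.fg_of_isNoetherianRing (Ideal.span S))
  obtain ⟨m, f, -, hf⟩ := s.finite_toSet.fin_param
  refine ⟨m, f, fun j => hsS (hf ▸ Set.mem_range_self j), fun x hx => ?_⟩
  have hzeros : zeroLocus K (Ideal.span S) = zeroLocus K (Ideal.span (Set.range f)) := by
    rw [hf]
    exact congrArg (zeroLocus K) hspan
  rw [zeroLocus_span, zeroLocus_span] at hzeros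
  exact hzeros.superset (Set.forall_mem_range.2 hx)

theorem degreeHull_cutOutDegree [Finite σ] (hV : IsRelAlgebraic X V) :
    degreeHull X V (cutOutDegree X V) = V := by
  suffices h : {i | degreeHull X V i = V}.Nonempty from Nat.sInf_mem h
  obtain ⟨m, f, hfV, hf⟩ :=
    exists_fin_family_same_zeros (vanishingIdeal K V : Set (MvPolynomial σ K))
  refine ⟨Finset.univ.sup fun j => (f j).totalDegree, Set.Subset.antisymm (fun x hx => ?_)
    (subset_degreeHull hV.subset _)⟩
  have hzero (j : Fin m) : eval x (f j) = 0 :=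
    hx.2 _ (hfV j) (Finset.le_sup (f := fun j => (f j).totalDegree) (Finset.mem_univ j))
  exact hV.inter_zeroLocus_vanishingIdeal.subset ⟨hx.1, hf x hzero⟩

variable [LinearOrder K] [IsStrictOrderedRing K]

theorem isLeast_totalDegree_sum_sq_vanishing (hV : vanishingIdeal K V ≠ ⊥) :
    IsLeast {D : ℕ | ∃ (m : ℕ) (f : Fin m → MvPolynomial σ K), (∃ j, f j ≠ 0) ∧
      (∀ x ∈ V, eval x (∑ j, f j ^ 2) = 0) ∧ (∑ j, f j ^ 2).totalDegree = D}
      (2 * minVanishingDegree V) := by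
  constructor
  · obtain ⟨f, hf, hf0, hdeg⟩ := exists_totalDegree_eq_minVanishingDegree hV
    refine ⟨1, fun _ => f, ⟨0, hf0⟩, sum_sq_mem_vanishingIdeal_iff.2 fun _ _ => hf, ?_⟩
    rw [totalDegree_sum_sq, Finset.sup_const Finset.univ_nonempty, hdeg]
  · rintro D ⟨m, f, ⟨j, hj⟩, hfV, rfl⟩
    have hjV : f j ∈ vanishingIdeal K V :=
      sum_sq_mem_vanishingIdeal_iff.1 hfV j (Finset.mem_univ j)
    calc 2 * minVanishingDegree V
        ≤ 2 * (f j).totalDegree := by gcongr; exact minVanishingDegree_le hjV hj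
      _ ≤ (∑ j, f j ^ 2).totalDegree :=
        two_mul_totalDegree_le_totalDegree_sum_sq f (Finset.mem_univ j)

theorem two_mul_cutOutDegree_le_totalDegree_sum_sq (hVX : V ⊆ X) {ι : Type*} {s : Finset ι}
    {f : ι → MvPolynomial σ K} (hzero : ∀ x ∈ V, eval x (∑ j ∈ s, f j ^ 2) = 0)
    (hpos : ∀ x ∈ X \ V, 0 < eval x (∑ j ∈ s, f j ^ 2)) :
    2 * cutOutDegree X V ≤ (∑ j ∈ s, f j ^ 2).totalDegree := by
  rw [totalDegree_sum_sq]
  gcongr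
  refine cutOutDegree_le hVX fun x ⟨hxX, hx⟩ => ?_
  by_contra hxV
  obtain ⟨j, hj, hne⟩ := eval_sum_sq_pos_iff.1 (hpos x ⟨hxX, hxV⟩)
  exact hne (hx (f j) (sum_sq_mem_vanishingIdeal_iff.1 hzero j hj)
    (Finset.le_sup (f := fun j => (f j).totalDegree) hj))

theorem isLeast_totalDegree_sum_sq_separating [Finite σ] (hV : IsRelAlgebraic X V) (hVX : V ≠ X) :
    IsLeast {D : ℕ | ∃ (m : ℕ) (f : Fin m → MvPolynomial σ K), (∃ j, f j ≠ 0) ∧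
      (∀ x ∈ V, eval x (∑ j, f j ^ 2) = 0) ∧ (∀ x ∈ X \ V, 0 < eval x (∑ j, f j ^ 2)) ∧
      (∑ j, f j ^ 2).totalDegree = D} (2 * cutOutDegree X V) := by
  constructor
  · obtain ⟨m, f, hfS, hf⟩ := exists_fin_family_same_zeros
      {g | g ∈ vanishingIdeal K V ∧ g.totalDegree ≤ cutOutDegree X V}
    have hne : ∀ x ∈ X \ V, ∃ j, eval x (f j) ≠ 0 := by
      rintro x ⟨hxX, hxV⟩
      by_contra! hx
      rw [← degreeHull_cutOutDegree hV] at hxV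
      exact hxV ⟨hxX, fun g hg hdeg => hf x hx g ⟨hg, hdeg⟩⟩
    have hzero : ∀ x ∈ V, eval x (∑ j, f j ^ 2) = 0 :=
      sum_sq_mem_vanishingIdeal_iff.2 fun j _ => (hfS j).1
    have hpos : ∀ x ∈ X \ V, 0 < eval x (∑ j, f j ^ 2) := fun x hx =>
      let ⟨j, hj⟩ := hne x hx
      eval_sum_sq_pos_iff.2 ⟨j, Finset.mem_univ j, hj⟩
    refine ⟨m, f, ?_, hzero, hpos, le_antisymm ?_ ?_⟩
    · obtain ⟨x, hx⟩ := Set.nonempty_of_ssubset (hV.subset.ssubset_of_ne hVX)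
      obtain ⟨j, hj⟩ := hne x hx
      exact ⟨j, fun h => hj (by rw [h, map_zero])⟩
    · rw [totalDegree_sum_sq]
      gcongr
      exact Finset.sup_le fun j _ => (hfS j).2
    · exact two_mul_cutOutDegree_le_totalDegree_sum_sq hV.subset hzero hpos
  · rintro D ⟨m, f, -, hzero, hpos, rfl⟩
    exact two_mul_cutOutDegree_le_totalDegree_sum_sq hV.subset hzero hpos

theorem stmt_9_general [Finite σ] (hV : IsRelAlgebraic X V) (hVX : V ≠ X) :
    IsLeast {D : ℕ | ∃ (m : ℕ) (f : Fin m → MvPolynomial σ K), (∃ j, f j ≠ 0) ∧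
      (∀ x ∈ V, eval x (∑ j, f j ^ 2) = 0) ∧ (∑ j, f j ^ 2).totalDegree = D}
      (2 * minVanishingDegree V) ∧
    IsLeast {D : ℕ | ∃ (m : ℕ) (f : Fin m → MvPolynomial σ K), (∃ j, f j ≠ 0) ∧
      (∀ x ∈ V, eval x (∑ j, f j ^ 2) = 0) ∧ (∀ x ∈ X \ V, 0 < eval x (∑ j, f j ^ 2)) ∧
      (∑ j, f j ^ 2).totalDegree = D} (2 * cutOutDegree X V) :=
  ⟨isLeast_totalDegree_sum_sq_vanishing (hV.vanishingIdeal_ne_bot hVX),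
    isLeast_totalDegree_sum_sq_separating hV hVX⟩

end DegreeThresholds

section Simplex

theorem liftProj_succ (n : ℕ) (x : Fin n → ℝ) :
    liftProj (n + 1) x = Fin.snoc x (1 - ∑ j, x j) := by
  ext i
  simp [liftProj, Fin.snoc, Fin.castLT]

theorem liftProj_mem_probSimplex_iff {k : ℕ} (hk : k ≠ 0) {x : Fin (k - 1) → ℝ} :
    liftProj k x ∈ probSimplex (Fin k) ↔ x ∈ projSimplex k := by
  obtain ⟨n, rfl⟩ := Nat.exists_eq_succ_of_ne_zero hk
  simp [probSimplex, projSimplex, liftProj_succ, Fin.forall_fin_succ', Fin.sum_univ_castSucc]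

theorem liftProj_projPoint {k : ℕ} (hk : k ≠ 0) {p : Fin k → ℝ} (hp : ∑ i, p i = 1) :
    liftProj k (projPoint k p) = p := by
  obtain ⟨n, rfl⟩ := Nat.exists_eq_succ_of_ne_zero hk
  have hlast : 1 - ∑ j, projPoint (n + 1) p j = p (Fin.last n) := by
    rw [← hp, Fin.sum_univ_castSucc]
    exact add_sub_cancel_left _ _
  calc liftProj (n + 1) (projPoint (n + 1) p)
      = Fin.snoc (Fin.init p) (p (Fin.last n)) := by rw [liftProj_succ, ← hlast]; rfl
    _ = p := Fin.snoc_init_self p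

theorem liftProj_image_projSimplex {k : ℕ} (hk : k ≠ 0) :
    liftProj k '' projSimplex k = probSimplex (Fin k) := by
  refine Set.Subset.antisymm ?_ fun p hp => ?_
  · exact Set.image_subset_iff.2 fun x => (liftProj_mem_probSimplex_iff hk).2
  · have hlift := liftProj_projPoint hk hp.2
    exact ⟨projPoint k p, (liftProj_mem_probSimplex_iff hk).1 (hlift.symm ▸ hp), hlift⟩

/-- The coordinates of `liftProj k` as polynomials. -/
noncomputable def liftProjPoly (k : ℕ) (i : Fin k) : MvPolynomial (Fin (k - 1)) ℝ :=
  if h : (i : ℕ) < k - 1 then X ⟨i, h⟩ else 1 - ∑ j, X j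

theorem eval_liftProjPoly (k : ℕ) (x : Fin (k - 1) → ℝ) (i : Fin k) :
    eval x (liftProjPoly k i) = liftProj k x i := by
  unfold liftProjPoly liftProj
  split_ifs <;> simp

theorem isRelAlgebraic_sep_liftProj_mem {k : ℕ} (hk : k ≠ 0) {P : Set (Fin k → ℝ)}
    (hP : IsRelAlgebraic (probSimplex (Fin k)) P) :
    IsRelAlgebraic (projSimplex k) {x ∈ projSimplex k | liftProj k x ∈ P} :=
  hP.inter_preimage_of_eval_eq (eval_liftProjPoly k) fun _ =>
    (liftProj_mem_probSimplex_iff hk).2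

theorem sep_liftProj_mem_ne_projSimplex {k : ℕ} (hk : k ≠ 0) {P : Set (Fin k → ℝ)}
    (hP : ¬ probSimplex (Fin k) ⊆ P) :
    {x ∈ projSimplex k | liftProj k x ∈ P} ≠ projSimplex k := by
  intro h
  apply hP
  rw [← liftProj_image_projSimplex hk, Set.image_subset_iff]
  exact Set.sep_eq_self_iff_mem_true.1 h

end Simplex

/-- sum-of-squares degree thresholds in terms of the vanishing ideal. -/
theorem stmt_9 (k : ℕ) (hk : 2 ≤ k)
    (G : Set (MvPolynomial (Fin k) ℝ))
    (P0 : Set (Fin k → ℝ))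
    (hP0 : P0 = probSimplex (Fin k) ∩ {π | ∀ g ∈ G, MvPolynomial.eval π g = 0})
    (hne : P0.Nonempty) (hneq : P0 ≠ probSimplex (Fin k))
    (Pt0 : Set (Fin (k - 1) → ℝ))
    (hPt0 : Pt0 = {π' ∈ projSimplex k | liftProj k π' ∈ P0})
    (VI : Set (MvPolynomial (Fin (k - 1)) ℝ))
    (hVI : VI = {f | ∀ π' ∈ Pt0, MvPolynomial.eval π' f = 0})
    (d₀ d : ℕ)
    (hd₀ : d₀ = sInf (MvPolynomial.totalDegree '' {f ∈ VI | f ≠ 0}))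
    (hd : d = sInf {i : ℕ |
      {π' ∈ projSimplex k | ∀ f ∈ VI, f.totalDegree ≤ i → MvPolynomial.eval π' f = 0} = Pt0}) :
    IsLeast {D : ℕ | ∃ (m : ℕ) (f : Fin m → MvPolynomial (Fin (k - 1)) ℝ),
        (∃ j, f j ≠ 0) ∧
        (∀ π' ∈ Pt0, MvPolynomial.eval π' (∑ j, (f j) ^ 2) = 0) ∧
        (∑ j, (f j) ^ 2).totalDegree = D} (2 * d₀) ∧
    IsLeast {D : ℕ | ∃ (m : ℕ) (f : Fin m → MvPolynomial (Fin (k - 1)) ℝ),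
        (∃ j, f j ≠ 0) ∧
        (∀ π' ∈ Pt0, MvPolynomial.eval π' (∑ j, (f j) ^ 2) = 0) ∧
        (∀ π' ∈ projSimplex k \ Pt0, 0 < MvPolynomial.eval π' (∑ j, (f j) ^ 2)) ∧
        (∑ j, (f j) ^ 2).totalDegree = D} (2 * d) := by
  have hk0 : k ≠ 0 := by lia
  have hP0alg : IsRelAlgebraic (probSimplex (Fin k)) P0 := ⟨G, hP0⟩
  subst hPt0 hVI hd₀ hd
  exact stmt_9_general (isRelAlgebraic_sep_liftProj_mem hk0 hP0alg)
    (sep_liftProj_mem_ne_projSimplex hk0 (hP0alg.subset.ssubset_of_ne hneq).not_subset)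
end

section
/- Let f_1,…,f_m ∈ MvPolynomial (Fin q) ℝ, and let φ : ℂ^p → ℂ^q be a map whose q components are given by evaluating polynomials with real coefficients, such that the image φ(ℂ^p) equals the complex zero set {z ∈ ℂ^q : f_i(z) = 0 for i = 1,…,m} (evaluating each f_i via the inclusion ℝ ⊆ ℂ). Let S ⊆ ℝ^p have nonempty interior and set P0 = φ(S) (a subset of ℝ^q). Then for every g ∈ MvPolynomial (Fin q) ℝ: g vanishes at every point of P0 if and only if the image of g under coefficient extension MvPolynomial.map (algebraMap ℝ ℂ) belongs to the radical of the ideal of MvPolynomial (Fin q) ℂ generated by the images of f_1,…,f_m. -/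
/-!
Let `φ` be the polynomial map with components `Φ`. A polynomial `g` vanishes on `φ(S)` iff the
polynomial `g ∘ φ` vanishes on `S`. If `S` is Zariski dense this means `g ∘ φ = 0`, a condition that
no longer mentions `S` or the field containing its points. Since the set of all points over an
infinite field is also Zariski dense, `g` vanishes on `φ(S)` iff it vanishes on the whole image of
`φ` over the algebraically closed field, and the Nullstellensatz identifies the polynomials with
this property. A set with nonempty interior is Zariski dense because it contains a box with
infinite sides.
-/

open MvPolynomial Topology

section Field

variable {k K L σ τ : Type*} [Field k] [Field K] [Field L] [Algebra k K] [Algebra k L]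

theorem vanishingIdeal_eq_bot_of_pi_subset {S : Set (σ → K)} {s : σ → Set K}
    (hs : ∀ i, (s i).Infinite) (hsS : Set.univ.pi s ⊆ S) : vanishingIdeal k S = ⊥ := by
  refine (Submodule.eq_bot_iff _).2 fun g hg ↦ ?_
  refine map_injective (algebraMap k K) (algebraMap k K).injective (funext_set s hs fun x hx ↦ ?_)
  rw [eval_map, ← aeval_def, hg x (hsS hx), map_zero, map_zero]

theorem vanishingIdeal_univ_eq_bot [Infinite K] :
    vanishingIdeal k (Set.univ : Set (σ → K)) = ⊥ :=
  vanishingIdeal_eq_bot_of_pi_subset (fun _ ↦ Set.infinite_univ) (Set.subset_univ _)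

theorem vanishingIdeal_eq_bot_of_nonempty_interior [TopologicalSpace K] [T1Space K]
    [PerfectSpace K] {S : Set (σ → K)} (hS : (interior S).Nonempty) :
    vanishingIdeal k S = ⊥ := by
  obtain ⟨x, hx⟩ := hS
  have hxS : S ∈ Filter.pi fun i ↦ 𝓝 (x i) := nhds_pi (a := x) ▸ mem_interior_iff_mem_nhds.1 hx
  obtain ⟨I, -, t, ht, htS⟩ := Filter.mem_pi.1 hxS
  exact vanishingIdeal_eq_bot_of_pi_subset (fun i ↦ infinite_of_mem_nhds (x i) (ht i))
    ((Set.pi_mono' (fun _ _ ↦ subset_rfl) (Set.subset_univ I)).trans htS)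

variable (L) in
/-- The polynomial map `L^σ → L^τ` whose components are the polynomials `Φ j`. The coefficients lie
in `k` and the points in an extension `L`, so that one family `Φ` gives maps over several fields. -/
noncomputable def polynomialMap (Φ : τ → MvPolynomial σ k) (x : σ → L) : τ → L :=
  fun j ↦ aeval x (Φ j)

theorem vanishingIdeal_image_polynomialMap (Φ : τ → MvPolynomial σ k) (S : Set (σ → L)) :
    vanishingIdeal k (polynomialMap L Φ '' S) = (vanishingIdeal k S).comap (bind₁ Φ) := by
  ext g
  simp only [mem_vanishingIdeal_iff, Set.forall_mem_image, Ideal.mem_comap, aeval_bind₁]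
  rfl

theorem vanishingIdeal_range_polynomialMap [Infinite L] (Φ : τ → MvPolynomial σ k) :
    vanishingIdeal k (Set.range (polynomialMap L Φ)) = RingHom.ker (bind₁ Φ) := by
  rw [← Set.image_univ, vanishingIdeal_image_polynomialMap, vanishingIdeal_univ_eq_bot]
  rfl

theorem zeroLocus_map_algebraMap (I : Ideal (MvPolynomial τ k)) :
    zeroLocus K (I.map (map (algebraMap k K))) = zeroLocus K I := by
  ext w
  simp only [Ideal.map, zeroLocus_span, Set.mem_ofPred_eq, Set.forall_mem_image, SetLike.mem_coe,
    aeval_map_algebraMap, mem_zeroLocus_iff]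

theorem comap_vanishingIdeal_map_algebraMap (V : Set (τ → K)) :
    (vanishingIdeal K V).comap (map (algebraMap k K)) = vanishingIdeal k V := by
  ext g
  simp only [Ideal.mem_comap, mem_vanishingIdeal_iff, aeval_map_algebraMap]

theorem vanishingIdeal_zeroLocus_eq_comap_radical_map [IsAlgClosed K] [Finite τ]
    (I : Ideal (MvPolynomial τ k)) :
    vanishingIdeal k (zeroLocus K I) =
      (I.map (map (algebraMap k K))).radical.comap (map (algebraMap k K)) := by
  rw [← vanishingIdeal_zeroLocus_eq_radical (K := K), zeroLocus_map_algebraMap,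
    comap_vanishingIdeal_map_algebraMap]

theorem stmt_11_general [IsAlgClosed K] [Finite τ] {I : Ideal (MvPolynomial τ k)}
    {Φ : τ → MvPolynomial σ k} (hΦ : Set.range (polynomialMap K Φ) = zeroLocus K I)
    {S : Set (σ → L)} (hS : vanishingIdeal k S = ⊥) :
    vanishingIdeal k (polynomialMap L Φ '' S) =
      (I.map (map (algebraMap k K))).radical.comap (map (algebraMap k K)) := by
  calc vanishingIdeal k (polynomialMap L Φ '' S)
      = RingHom.ker (bind₁ Φ) := by rw [vanishingIdeal_image_polynomialMap, hS]; rfl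
    _ = vanishingIdeal k (Set.range (polynomialMap K Φ)) :=
        (vanishingIdeal_range_polynomialMap Φ).symm
    _ = vanishingIdeal k (zeroLocus K I) := by rw [hΦ]
    _ = _ := vanishingIdeal_zeroLocus_eq_comap_radical_map I

end Field

/-- for a polynomially parameterized (complex) variety whose real points
contain the image `P0 = φ(S)` of a set `S` with nonempty interior, a real polynomial
vanishes on `P0` iff its complexification lies in the radical of the ideal generated by
the (complexified) defining polynomials. -/
theorem stmt_11 (p q : ℕ) (hp : 0 < p) (hq : 0 < q) (m : ℕ)
    (f : Fin m → MvPolynomial (Fin q) ℝ)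
    (Φ : Fin q → MvPolynomial (Fin p) ℝ)
    (himage : ∀ w : Fin q → ℂ,
      (∃ z : Fin p → ℂ, ∀ j,
        MvPolynomial.eval z (MvPolynomial.map (algebraMap ℝ ℂ) (Φ j)) = w j) ↔
      (∀ i, MvPolynomial.eval w (MvPolynomial.map (algebraMap ℝ ℂ) (f i)) = 0))
    (S : Set (Fin p → ℝ)) (hS : (interior S).Nonempty)
    (P0 : Set (Fin q → ℝ))
    (hP0 : P0 = {y | ∃ s ∈ S, ∀ j, MvPolynomial.eval s (Φ j) = y j}) :
    ∀ g : MvPolynomial (Fin q) ℝ,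
      (∀ y ∈ P0, MvPolynomial.eval y g = 0) ↔
      MvPolynomial.map (algebraMap ℝ ℂ) g ∈
        (Ideal.span (Set.range fun i => MvPolynomial.map (algebraMap ℝ ℂ) (f i))).radical := by
  intro g
  have hΦ : Set.range (polynomialMap ℂ Φ) = zeroLocus ℂ (Ideal.span (Set.range f)) := by
    ext w
    simpa [zeroLocus_span, polynomialMap, _root_.funext_iff, aeval_def, eval_map] using himage w
  have hP0_image : P0 = polynomialMap ℝ Φ '' S := by
    simp only [hP0, Set.image, polynomialMap, _root_.funext_iff, aeval_eq_eval]
  have hg := SetLike.ext_iff.1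
    (stmt_11_general hΦ (vanishingIdeal_eq_bot_of_nonempty_interior hS)) g
  rwa [← hP0_image, Ideal.mem_comap, Ideal.map_span, ← Set.range_comp] at hg
end
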